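/- Let k > 1 and define v(ξ) = 2(k²−1)/(cosh(√(3(k²−1)) ξ) + k). Then v satisfies the first-integral equation of the solitary waves of the 'bad' Kaup–Broer–Kupershmidt system with a = 1/3: (v'(ξ))² = (3/4) v(ξ)² (v(ξ) − (2k−2)) (v(ξ) − (2k+2)) for all ξ ∈ ℝ. -/

import Mathlib

/-!
For `v = A / (cosh (s ξ) + b)` the identity `sinh² = cosh² - 1` eliminates the hyperbolic functions
from `v'`, because `cosh (s ξ) = A / v - b`. This gives
`(A v')² = (s v)² (A - (b + 1) v) (A - (b - 1) v)`. For `b = k` and `A = 2 (k² - 1)` the two linear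
factors are multiples of `v - (2 k - 2)` and `v - (2 k + 2)`, and `s² = 3 (k² - 1)` produces the
constant `3 / 4` after cancelling `A²`.
-/

/-- The travelling-wave profile `ξ ↦ A / (cosh (s ξ) + b)` with amplitude parameter `A`, offset `b`
and inverse width `s`. For `b ≤ -1` and `s ≠ 0` it has poles, where division by zero assigns it the
value `0`. -/
noncomputable def coshProfile (A b s ξ : ℝ) : ℝ :=
  A / (Real.cosh (s * ξ) + b)

section coshProfile

variable {A b s ξ : ℝ}

theorem hasDerivAt_coshProfile (hξ : Real.cosh (s * ξ) + b ≠ 0) :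
    HasDerivAt (coshProfile A b s)
      (-(A * (s * Real.sinh (s * ξ))) / (Real.cosh (s * ξ) + b) ^ 2) ξ := by
  have hden : HasDerivAt (fun x ↦ Real.cosh (s * x) + b) (s * Real.sinh (s * ξ)) ξ := by
    simpa [mul_comm] using ((hasDerivAt_id ξ).const_mul s).cosh.add_const b
  exact ((hasDerivAt_const ξ A).fun_div hden hξ).congr_deriv (by ring)

theorem sq_mul_deriv_coshProfile (hξ : Real.cosh (s * ξ) + b ≠ 0) :
    (A * deriv (coshProfile A b s) ξ) ^ 2 =
      (s * coshProfile A b s ξ) ^ 2 *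
        ((A - (b + 1) * coshProfile A b s ξ) * (A - (b - 1) * coshProfile A b s ξ)) := by
  set v := coshProfile A b s ξ with hv
  have hderiv : A * deriv (coshProfile A b s) ξ = -(s * v) * (v * Real.sinh (s * ξ)) := by
    rw [(hasDerivAt_coshProfile hξ).deriv, hv, coshProfile]
    field_simp
  have hden : v * (Real.cosh (s * ξ) + b) = A := div_mul_cancel₀ A hξ
  have hcosh : v * Real.cosh (s * ξ) = A - b * v := by linear_combination hden
  calc (A * deriv (coshProfile A b s) ξ) ^ 2
      = (s * v) ^ 2 * ((v * Real.cosh (s * ξ)) ^ 2 - v ^ 2) := by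
        rw [hderiv, mul_pow, mul_pow v, Real.sinh_sq]; ring
    _ = (s * v) ^ 2 * ((A - (b + 1) * v) * (A - (b - 1) * v)) := by rw [hcosh]; ring

end coshProfile

theorem stmt_5_general (k : ℝ) (hk : 1 < |k|) (v : ℝ → ℝ)
    (hv : ∀ ξ, v ξ = 2 * (k ^ 2 - 1) / (Real.cosh (Real.sqrt (3 * (k ^ 2 - 1)) * ξ) + k))
    (ξ : ℝ) (hξ : Real.cosh (Real.sqrt (3 * (k ^ 2 - 1)) * ξ) + k ≠ 0) :
    (deriv v ξ) ^ 2 = (3 / 4) * (v ξ) ^ 2 * (v ξ - (2 * k - 2)) * (v ξ - (2 * k + 2)) := by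
  have hpos : 0 < k ^ 2 - 1 := sub_pos.mpr ((one_lt_sq_iff_one_lt_abs k).mpr hk)
  have hsqrt : Real.sqrt (3 * (k ^ 2 - 1)) ^ 2 = 3 * (k ^ 2 - 1) := Real.sq_sqrt (by positivity)
  obtain rfl : v = coshProfile (2 * (k ^ 2 - 1)) k (Real.sqrt (3 * (k ^ 2 - 1))) := funext hv
  have hintegral := sq_mul_deriv_coshProfile (A := 2 * (k ^ 2 - 1)) hξ
  rw [mul_pow, mul_pow (Real.sqrt _), hsqrt] at hintegral
  apply mul_left_cancel₀ (pow_ne_zero 2 (mul_ne_zero two_ne_zero hpos.ne'))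
  linear_combination hintegral

/-- For `k > 1`, the profile `v(ξ) = 2(k²−1)/(cosh(√(3(k²−1)) ξ) + k)` satisfies the
first-integral equation of the solitary waves of the bad KBK system (`a = 1/3`):
`(v')² = (3/4) v² (v − (2k−2)) (v − (2k+2))`. -/
theorem stmt_5 (k : ℝ) (hk : 1 < k) (v : ℝ → ℝ)
    (hv : ∀ ξ, v ξ = 2 * (k ^ 2 - 1) / (Real.cosh (Real.sqrt (3 * (k ^ 2 - 1)) * ξ) + k)) :
    ∀ ξ : ℝ, (deriv v ξ) ^ 2
      = (3 / 4) * (v ξ) ^ 2 * (v ξ - (2 * k - 2)) * (v ξ - (2 * k + 2)) :=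
  fun ξ ↦ stmt_5_general k (lt_abs.mpr (.inl hk)) v hv ξ
    (add_pos (Real.cosh_pos _) (one_pos.trans hk)).ne'
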